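/- Let Γ be a connected bipartite (δ_1,δ_2)-semiregular graph on n = n_1 + n_2 vertices with d+1 distinct eigenvalues, where d is even and m(0) ≠ |n_1 − n_2|. Then Γ is distance-biregular if and only if k̄_{1,d} = p_{1,d}(λ_0) and k̄_{2,d} = p_{2,d}(λ_0). -/

import Mathlib

open Polynomial Finset Matrix

/-- The discrete scalar product `⟨f,g⟩ = ∑_{i∈s} w i · f(λ i) · g(λ i)` on a mesh. -/
def discInner (s : Finset ℕ) (lam w : ℕ → ℝ) (f g : Polynomial ℝ) : ℝ :=
  ∑ i ∈ s, w i * f.eval (lam i) * g.eval (lam i)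

/-- `Γ_i(u)`: the set of vertices at distance `i` from `u`. -/
noncomputable def sphere {V : Type*} [Fintype V] [DecidableEq V] (G : SimpleGraph V)
    (u : V) (i : ℕ) : Finset V :=
  Finset.univ.filter (fun v => G.dist u v = i)

/-- `Γ` (bipartite with stable sets `V₁, V₂`) is distance-biregular: it is
distance-regular around each vertex, and the intersection numbers
`c_i(u,v) = |Γ_{i−1}(u)∩Γ(v)|` and `b_i(u,v) = |Γ_{i+1}(u)∩Γ(v)|` (for `v ∈ Γ_i(u)`)
depend only on `i` and on the stable set containing `u`. -/
def IsDistBiregularOn {V : Type*} [Fintype V] [DecidableEq V] (G : SimpleGraph V)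
    [DecidableRel G.Adj] (V1 V2 : Finset V) : Prop :=
  ∃ c1 b1 c2 b2 : ℕ → ℕ,
    (∀ u ∈ V1, ∀ v : V,
      (sphere G u (G.dist u v - 1) ∩ G.neighborFinset v).card = c1 (G.dist u v) ∧
      (sphere G u (G.dist u v + 1) ∩ G.neighborFinset v).card = b1 (G.dist u v)) ∧
    (∀ u ∈ V2, ∀ v : V,
      (sphere G u (G.dist u v - 1) ∩ G.neighborFinset v).card = c2 (G.dist u v) ∧
      (sphere G u (G.dist u v + 1) ∩ G.neighborFinset v).card = b2 (G.dist u v))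

section DiscreteOrthogonality

variable {d : ℕ} {lam w : ℕ → ℝ} {p : ℕ → Polynomial ℝ}

/-- The discrete scalar product with a fixed right argument, as a linear functional. -/
def discInnerLeft (s : Finset ℕ) (lam w : ℕ → ℝ) (g : Polynomial ℝ) :
    Polynomial ℝ →ₗ[ℝ] ℝ where
  toFun f := discInner s lam w f g
  map_add' f h := by
    simp only [discInner, eval_add, mul_add, add_mul, Finset.sum_add_distrib]
  map_smul' c f := by
    simp only [discInner, eval_smul, smul_eq_mul, RingHom.id_apply, Finset.mul_sum]
    exact Finset.sum_congr rfl fun _ _ => by ring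

@[simp]
lemma discInnerLeft_apply (s : Finset ℕ) (lam w : ℕ → ℝ) (f g : Polynomial ℝ) :
    discInnerLeft s lam w g f = discInner s lam w f g := rfl

lemma discInner_comm (s : Finset ℕ) (lam w : ℕ → ℝ) (f g : Polynomial ℝ) :
    discInner s lam w f g = discInner s lam w g f :=
  Finset.sum_congr rfl fun _ _ => by ring

lemma discInner_mul_X (s : Finset ℕ) (lam w : ℕ → ℝ) (f g : Polynomial ℝ) :
    discInner s lam w (f * X) g = discInner s lam w f (g * X) :=
  Finset.sum_congr rfl fun _ _ => by simp only [eval_mul, eval_X]; ring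

/-- Cancelling the top coefficient of `q` against a polynomial of degree exactly `n`. -/
lemma degree_sub_smul_lt {q r : Polynomial ℝ} {n : ℕ} (hr : r.degree = n) (hq : q.degree ≤ n) :
    (q - (q.coeff n / r.coeff n) • r).degree < n := by
  have hne : r.coeff n ≠ 0 := coeff_ne_zero_of_eq_degree hr
  rw [degree_lt_iff_coeff_zero]
  intro m hm
  rcases hm.eq_or_lt with rfl | hm
  · simp [hne]
  · have h1 : q.coeff m = 0 := coeff_eq_zero_of_degree_lt
      (hq.trans_lt (by exact_mod_cast hm))
    have h2 : r.coeff m = 0 := coeff_eq_zero_of_degree_lt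
      (hr.trans_lt (by exact_mod_cast hm))
    simp [h1, h2]

/-- A linear functional vanishing on `p 0, …, p (n-1)`, where `deg (p i) = i`, vanishes on all
polynomials of degree less than `n`. -/
lemma linearMap_eq_zero_of_degree_lt (φ : Polynomial ℝ →ₗ[ℝ] ℝ) (n : ℕ)
    (hdeg : ∀ i < n, (p i).degree = (i : WithBot ℕ)) (hφ : ∀ i < n, φ (p i) = 0)
    {q : Polynomial ℝ} (hq : q.degree < n) : φ q = 0 := by
  induction n generalizing q with
  | zero =>
    have : q = 0 := by simpa using hq
    simp [this]
  | succ n ih =>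
    have hlt := degree_sub_smul_lt (hdeg n n.lt_succ_self) (q := q)
      (Order.lt_succ_iff.mp (by exact_mod_cast hq) )
    have := ih (fun i hi => hdeg i (hi.trans n.lt_succ_self))
      (fun i hi => hφ i (hi.trans n.lt_succ_self)) hlt
    simpa [hφ n n.lt_succ_self] using this

lemma eval_eq_zero_of_discInner_self_eq_zero (hw : ∀ i ≤ d, 0 < w i) {f : Polynomial ℝ}
    (hf : discInner (range (d + 1)) lam w f f = 0) {i : ℕ} (hi : i ≤ d) :
    f.eval (lam i) = 0 := by
  have hnn : ∀ j ∈ range (d + 1), 0 ≤ w j * f.eval (lam j) * f.eval (lam j) := fun j hj => by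
    have := hw j (Nat.lt_succ_iff.mp (mem_range.mp hj))
    rw [mul_assoc]
    exact mul_nonneg this.le (mul_self_nonneg _)
  have h := (Finset.sum_eq_zero_iff_of_nonneg hnn).mp hf i (mem_range.mpr (by omega))
  simpa [(hw i hi).ne'] using h

lemma eq_zero_of_discInner_self_eq_zero (hlam : StrictAntiOn lam (Set.Iic d))
    (hw : ∀ i ≤ d, 0 < w i) {f : Polynomial ℝ} (hdeg : f.degree ≤ d)
    (hf : discInner (range (d + 1)) lam w f f = 0) : f = 0 := by
  refine eq_zero_of_degree_lt_of_eval_index_eq_zero (v := lam) (range (d + 1)) ?_ ?_ ?_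
  · intro i hi j hj
    exact hlam.injOn (by simpa [Nat.lt_succ_iff] using hi) (by simpa [Nat.lt_succ_iff] using hj)
  · rw [card_range]
    exact hdeg.trans_lt (by exact_mod_cast d.lt_succ_self)
  · intro i hi
    exact eval_eq_zero_of_discInner_self_eq_zero hw hf (Nat.lt_succ_iff.mp (mem_range.mp hi))

/-- The Lagrange basis polynomial recovers values on the mesh. -/
lemma discInner_lagrange_basis (hlam : StrictAntiOn lam (Set.Iic d)) (f : Polynomial ℝ)
    {k : ℕ} (hk : k ≤ d) :
    discInner (range (d + 1)) lam w (Lagrange.basis (range (d + 1)) lam k) f =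
      w k * f.eval (lam k) := by
  have hinj : Set.InjOn lam (range (d + 1)) := fun i hi j hj =>
    hlam.injOn (by simpa [Nat.lt_succ_iff] using hi) (by simpa [Nat.lt_succ_iff] using hj)
  have hk' : k ∈ range (d + 1) := mem_range.mpr (by omega)
  rw [discInner, Finset.sum_eq_single_of_mem k hk']
  · simp [Lagrange.eval_basis_self hinj hk']
  · intro j hj hjk
    simp [Lagrange.eval_basis_of_ne hjk.symm hj]

lemma degree_lagrange_basis_lt (hlam : StrictAntiOn lam (Set.Iic d)) {k : ℕ} (hk : k ≤ d) :
    (Lagrange.basis (range (d + 1)) lam k).degree < ((d + 1 : ℕ) : WithBot ℕ) := by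
  have hinj : Set.InjOn lam (range (d + 1)) := fun i hi j hj =>
    hlam.injOn (by simpa [Nat.lt_succ_iff] using hi) (by simpa [Nat.lt_succ_iff] using hj)
  rw [Lagrange.degree_basis hinj (mem_range.mpr (by omega)), card_range]
  exact_mod_cast d.lt_succ_self

/-- A system of orthogonal polynomials on the mesh `lam 0 > ⋯ > lam d` with positive weights
`w`, normalized by `‖p i‖² = p i (lam 0)`. -/
structure IsPredistance (d : ℕ) (lam w : ℕ → ℝ) (p : ℕ → Polynomial ℝ) : Prop where
  anti : StrictAntiOn lam (Set.Iic d)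
  pos : ∀ i ≤ d, 0 < w i
  degree : ∀ i ≤ d, (p i).degree = (i : WithBot ℕ)
  orth : ∀ i ≤ d, ∀ j ≤ d, i ≠ j → discInner (range (d + 1)) lam w (p i) (p j) = 0
  norm : ∀ i ≤ d, discInner (range (d + 1)) lam w (p i) (p i) = (p i).eval (lam 0)

namespace IsPredistance

lemma discInner_eq_zero_of_degree_lt (hp : IsPredistance d lam w p) {i : ℕ} (hi : i ≤ d)
    {q : Polynomial ℝ} (hq : q.degree < i) :
    discInner (range (d + 1)) lam w q (p i) = 0 :=
  linearMap_eq_zero_of_degree_lt (discInnerLeft (range (d + 1)) lam w (p i)) i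
    (fun j hj => hp.degree j (by omega))
    (fun j hj => hp.orth j (by omega) i hi hj.ne) hq

lemma discInner_self_ne_zero (hp : IsPredistance d lam w p) {i : ℕ} (hi : i ≤ d) :
    discInner (range (d + 1)) lam w (p i) (p i) ≠ 0 := fun h => by
  have h0 := eq_zero_of_discInner_self_eq_zero hp.anti hp.pos
    ((hp.degree i hi).le.trans (by exact_mod_cast hi)) h
  have := hp.degree i hi
  simp [h0] at this

/-- A polynomial orthogonal to all `p j` vanishes on the mesh. -/
lemma eval_eq_zero_of_orth (hp : IsPredistance d lam w p) {f : Polynomial ℝ}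
    (hf : ∀ j ≤ d, discInner (range (d + 1)) lam w f (p j) = 0) {k : ℕ} (hk : k ≤ d) :
    f.eval (lam k) = 0 := by
  have h := linearMap_eq_zero_of_degree_lt (discInnerLeft (range (d + 1)) lam w f) (d + 1)
    (fun j hj => hp.degree j (by omega))
    (fun j hj => by rw [discInnerLeft_apply, discInner_comm]; exact hf j (by omega))
    (degree_lagrange_basis_lt hp.anti hk)
  rw [discInnerLeft_apply, discInner_lagrange_basis hp.anti f hk] at h
  exact (mul_eq_zero.mp h).resolve_left (hp.pos k hk).ne'

/-- Fourier coefficients of `f` with respect to the system `p`. -/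
noncomputable def coef (d : ℕ) (lam w : ℕ → ℝ) (p : ℕ → Polynomial ℝ) (f : Polynomial ℝ)
    (j : ℕ) : ℝ :=
  discInner (range (d + 1)) lam w f (p j) / discInner (range (d + 1)) lam w (p j) (p j)

lemma eval_eq_sum_coef (hp : IsPredistance d lam w p) (f : Polynomial ℝ) {k : ℕ} (hk : k ≤ d) :
    f.eval (lam k) = (∑ j ∈ range (d + 1), coef d lam w p f j • p j).eval (lam k) := by
  rw [← sub_eq_zero, ← eval_sub]
  refine hp.eval_eq_zero_of_orth (fun i hi => ?_) hk
  rw [← discInnerLeft_apply, map_sub, map_sum, Finset.sum_eq_single_of_mem i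
    (mem_range.mpr (by omega))]
  · simp [coef, hp.discInner_self_ne_zero hi]
  · intro j hj hji
    simp [hp.orth j (Nat.lt_succ_iff.mp (mem_range.mp hj)) i hi hji]

/-- The sum of the system is the Hoffman polynomial of the mesh. -/
lemma weight_mul_eval_sum (hp : IsPredistance d lam w p) {k : ℕ} (hk : k ≤ d) :
    w k * (∑ j ∈ range (d + 1), p j).eval (lam k) = if k = 0 then 1 else 0 := by
  have h := linearMap_eq_zero_of_degree_lt
    (discInnerLeft (range (d + 1)) lam w (∑ j ∈ range (d + 1), p j) - leval (lam 0)) (d + 1)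
    (fun j hj => hp.degree j (by omega)) (fun i hi => ?_)
    (degree_lagrange_basis_lt hp.anti hk)
  · rw [LinearMap.sub_apply, discInnerLeft_apply, discInner_lagrange_basis hp.anti _ hk,
      sub_eq_zero] at h
    rw [h]
    split_ifs with h0
    · subst h0
      exact Lagrange.eval_basis_self (fun i hi j hj =>
        hp.anti.injOn (by simpa [Nat.lt_succ_iff] using hi)
          (by simpa [Nat.lt_succ_iff] using hj)) (by simp)
    · exact Lagrange.eval_basis_of_ne h0 (by simp)
  · rw [LinearMap.sub_apply, discInnerLeft_apply, discInner_comm, ← discInnerLeft_apply, map_sum,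
      Finset.sum_eq_single_of_mem i (mem_range.mpr hi)]
    · simp [hp.norm i (by omega), leval]
    · intro j hj hji
      exact hp.orth j (Nat.lt_succ_iff.mp (mem_range.mp hj)) i (by omega) hji

lemma coef_mul_X_of_add_one_lt (hp : IsPredistance d lam w p) {i j : ℕ} (hi : i ≤ d)
    (hji : j + 1 < i) : coef d lam w p (p i * X) j = 0 := by
  rw [coef, discInner_mul_X, discInner_comm, hp.discInner_eq_zero_of_degree_lt hi, zero_div]
  rw [degree_mul, hp.degree j (by omega), degree_X]
  exact_mod_cast hji

lemma coef_mul_X_ne_zero (hp : IsPredistance d lam w p) {i : ℕ} (hi : i + 1 ≤ d) :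
    coef d lam w p (p (i + 1) * X) i ≠ 0 := by
  refine div_ne_zero ?_ (hp.discInner_self_ne_zero (by omega))
  have hdeg : (p i * X).degree = ((i + 1 : ℕ) : WithBot ℕ) := by
    rw [degree_mul, hp.degree i (by omega), degree_X]
    rfl
  have h := hp.discInner_eq_zero_of_degree_lt hi
    (degree_sub_smul_lt (hp.degree _ hi) hdeg.le)
  rw [← discInnerLeft_apply, map_sub, map_smul, sub_eq_zero] at h
  rw [discInner_mul_X, discInner_comm, ← discInnerLeft_apply, h]
  exact mul_ne_zero (div_ne_zero (coeff_ne_zero_of_eq_degree hdeg)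
    (coeff_ne_zero_of_eq_degree (hp.degree _ hi))) (hp.discInner_self_ne_zero hi)

end IsPredistance

end DiscreteOrthogonality

section SpectralDecomposition

variable {V : Type*} [Fintype V] [DecidableEq V] {G : SimpleGraph V} [DecidableRel G.Adj]

/-- The average over `S` of the local multiplicities of the `i`-th eigenvalue. -/
noncomputable abbrev avgMult (E : ℕ → Matrix V V ℝ) (S : Finset V) : ℕ → ℝ :=
  fun i => (∑ u ∈ S, E i u u) / (S.card : ℝ)

/-- A family of symmetric orthogonal idempotents resolving the identity into eigenspaces of the
adjacency matrix, with eigenvalues `lam 0 > ⋯ > lam d`. -/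
structure IsSpectralDecomposition (G : SimpleGraph V) [DecidableRel G.Adj] (d : ℕ)
    (lam : ℕ → ℝ) (E : ℕ → Matrix V V ℝ) : Prop where
  anti : StrictAntiOn lam (Set.Iic d)
  symm : ∀ i ≤ d, (E i).IsSymm
  sum : ∑ i ∈ range (d + 1), E i = 1
  mul : ∀ i ≤ d, ∀ j ≤ d, E i * E j = if i = j then E i else 0
  eig : ∀ i ≤ d, G.adjMatrix ℝ * E i = lam i • E i
  ne_zero : ∀ i ≤ d, E i ≠ 0

namespace IsSpectralDecomposition

variable {d : ℕ} {lam : ℕ → ℝ} {E : ℕ → Matrix V V ℝ}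

lemma aeval_mul (hE : IsSpectralDecomposition G d lam E) (f : Polynomial ℝ) {i : ℕ}
    (hi : i ≤ d) : aeval (G.adjMatrix ℝ) f * E i = f.eval (lam i) • E i := by
  induction f using Polynomial.induction_on' with
  | add f g hf hg => rw [map_add, add_mul, hf, hg, eval_add, add_smul]
  | monomial n a =>
    have hpow : ∀ n : ℕ, G.adjMatrix ℝ ^ n * E i = lam i ^ n • E i := by
      intro n
      induction n with
      | zero => simp
      | succ n ih =>
        rw [pow_succ, mul_assoc, hE.eig i hi, Matrix.mul_smul, ih, smul_smul, pow_succ']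
    rw [aeval_monomial, eval_monomial, mul_assoc, hpow, ← Algebra.smul_def, smul_smul]

lemma aeval_eq_sum (hE : IsSpectralDecomposition G d lam E) (f : Polynomial ℝ) :
    aeval (G.adjMatrix ℝ) f = ∑ i ∈ range (d + 1), f.eval (lam i) • E i := by
  conv_lhs => rw [← mul_one (aeval (G.adjMatrix ℝ) f), ← hE.sum, Finset.mul_sum]
  exact Finset.sum_congr rfl fun i hi =>
    hE.aeval_mul f (Nat.lt_succ_iff.mp (mem_range.mp hi))

lemma aeval_congr (hE : IsSpectralDecomposition G d lam E) {f g : Polynomial ℝ}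
    (h : ∀ i ≤ d, f.eval (lam i) = g.eval (lam i)) :
    aeval (G.adjMatrix ℝ) f = aeval (G.adjMatrix ℝ) g := by
  rw [hE.aeval_eq_sum, hE.aeval_eq_sum]
  exact Finset.sum_congr rfl fun i hi => by rw [h i (Nat.lt_succ_iff.mp (mem_range.mp hi))]

lemma aeval_symm (hE : IsSpectralDecomposition G d lam E) (f : Polynomial ℝ) (u v : V) :
    aeval (G.adjMatrix ℝ) f u v = aeval (G.adjMatrix ℝ) f v u := by
  rw [hE.aeval_eq_sum]
  simp only [Matrix.sum_apply, Matrix.smul_apply]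
  exact Finset.sum_congr rfl fun i hi => by
    rw [(hE.symm i (Nat.lt_succ_iff.mp (mem_range.mp hi))).apply]

/-- The scalar product with averaged local multiplicities as weights is the averaged scalar
product of the rows of the matrices `f(A)`, `g(A)`. -/
lemma discInner_eq (hE : IsSpectralDecomposition G d lam E) (S : Finset V)
    (f g : Polynomial ℝ) :
    discInner (range (d + 1)) lam (avgMult E S) f g =
      (∑ u ∈ S, ∑ v, aeval (G.adjMatrix ℝ) f u v * aeval (G.adjMatrix ℝ) g u v) /
        (S.card : ℝ) := by
  have hrow : ∀ u, ∑ v, aeval (G.adjMatrix ℝ) f u v * aeval (G.adjMatrix ℝ) g u v =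
      ∑ i ∈ range (d + 1), f.eval (lam i) * g.eval (lam i) * E i u u := by
    intro u
    have h : aeval (G.adjMatrix ℝ) (f * g) u u =
        ∑ i ∈ range (d + 1), f.eval (lam i) * g.eval (lam i) * E i u u := by
      rw [hE.aeval_eq_sum]
      simp [Matrix.sum_apply]
    rw [← h, map_mul, Matrix.mul_apply]
    exact Finset.sum_congr rfl fun v _ => by rw [hE.aeval_symm g]
  simp only [hrow]
  rw [Finset.sum_comm, Finset.sum_div, discInner]
  refine Finset.sum_congr rfl fun i _ => ?_
  rw [← Finset.mul_sum]
  ring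

lemma apply_self_eq_sum_sq (hE : IsSpectralDecomposition G d lam E) {i : ℕ} (hi : i ≤ d) (u : V) :
    E i u u = ∑ v, E i u v ^ 2 := by
  conv_lhs => rw [← (hE.mul i hi i hi).trans (if_pos rfl), Matrix.mul_apply]
  exact Finset.sum_congr rfl fun v _ => by rw [(hE.symm i hi).apply, sq]

end IsSpectralDecomposition

lemma adjMatrix_pow_apply_eq_zero {n : ℕ} {u v : V} (h : n < G.dist u v) :
    (G.adjMatrix ℝ ^ n) u v = 0 := by
  rw [SimpleGraph.adjMatrix_pow_apply_eq_card_walk, Nat.cast_eq_zero, Fintype.card_eq_zero_iff]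
  exact ⟨fun p => by
    have := SimpleGraph.dist_le p.1
    have := p.2
    simp only [Set.mem_ofPred_eq] at this
    omega⟩

lemma aeval_adjMatrix_apply_eq_zero {f : Polynomial ℝ} {u v : V}
    (h : f.degree < (G.dist u v : WithBot ℕ)) : aeval (G.adjMatrix ℝ) f u v = 0 := by
  rw [aeval_eq_sum_range, Matrix.sum_apply]
  refine Finset.sum_eq_zero fun i _ => ?_
  rw [Matrix.smul_apply, smul_eq_mul]
  rcases lt_or_ge i (G.dist u v) with hi | hi
  · rw [adjMatrix_pow_apply_eq_zero hi, mul_zero]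
  · rw [coeff_eq_zero_of_degree_lt (h.trans_le (by exact_mod_cast hi)), zero_mul]

lemma aeval_adjMatrix_mul_X_apply (f : Polynomial ℝ) (u v : V) :
    aeval (G.adjMatrix ℝ) (f * X) u v =
      ∑ w ∈ G.neighborFinset v, aeval (G.adjMatrix ℝ) f u w := by
  rw [map_mul, aeval_X, SimpleGraph.mul_adjMatrix_apply]

end SpectralDecomposition

section SpectralExcess

variable {V : Type*} [Fintype V] [DecidableEq V] {G : SimpleGraph V} [DecidableRel G.Adj]

/-- The data of a set of vertices `S` for which the spectral excess argument works: around every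
`u ∈ S` the Perron idempotent has entries depending only on the distance to `u`, and no edge
joins two vertices equidistant from `u`. -/
structure IsSpectralSide (G : SimpleGraph V) [DecidableRel G.Adj] (d : ℕ) (lam : ℕ → ℝ)
    (E : ℕ → Matrix V V ℝ) (S : Finset V) (p : ℕ → Polynomial ℝ) (g : ℕ → ℝ) : Prop where
  connected : G.Connected
  spec : IsSpectralDecomposition G d lam E
  predist : IsPredistance d lam (avgMult E S) p
  dist_ne : ∀ u ∈ S, ∀ v w, G.Adj v w → G.dist u v ≠ G.dist u w
  pos : ∀ i, 0 < g i
  zero : g 0 = 1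
  last : g d = 1
  perron : ∃ e : ℝ, ∀ u ∈ S, ∀ v, E 0 u v = e * g (G.dist u v)

namespace IsSpectralSide

variable {d : ℕ} {lam : ℕ → ℝ} {E : ℕ → Matrix V V ℝ} {S : Finset V} {p : ℕ → Polynomial ℝ}
  {g : ℕ → ℝ}

lemma nonempty (h : IsSpectralSide G d lam E S p g) : S.Nonempty := by
  rw [Finset.nonempty_iff_ne_empty]
  rintro rfl
  simpa [avgMult] using h.predist.pos 0 (Nat.zero_le d)

lemma card_pos (h : IsSpectralSide G d lam E S p g) : (0 : ℝ) < S.card := by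
  exact_mod_cast h.nonempty.card_pos

/-- The rows indexed by `S` of the Hoffman polynomial evaluated at the adjacency matrix. -/
lemma sum_aeval_apply (h : IsSpectralSide G d lam E S p g) {u : V} (hu : u ∈ S) (v : V) :
    ∑ j ∈ range (d + 1), aeval (G.adjMatrix ℝ) (p j) u v = g (G.dist u v) := by
  obtain ⟨e, he⟩ := h.perron
  have hw0 : avgMult E S 0 = e := by
    have hdiag : ∀ u ∈ S, E 0 u u = e := fun u hu => by simp [he u hu u, h.zero]
    simp [avgMult, Finset.sum_congr rfl hdiag, h.card_pos.ne']
  have hepos : 0 < e := hw0 ▸ h.predist.pos 0 (Nat.zero_le d)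
  have hval : ∀ k ≤ d, (∑ j ∈ range (d + 1), p j).eval (lam k) = if k = 0 then e⁻¹ else 0 := by
    intro k hk
    have hk' := h.predist.weight_mul_eval_sum hk
    split_ifs at hk' ⊢ with h0
    · subst h0
      rw [hw0] at hk'
      exact eq_inv_of_mul_eq_one_right hk'
    · exact (mul_eq_zero.mp hk').resolve_left (h.predist.pos k hk).ne'
  rw [← Matrix.sum_apply, ← map_sum, h.spec.aeval_eq_sum, Matrix.sum_apply,
    Finset.sum_eq_single_of_mem 0 (by simp)]
  · rw [hval 0 (Nat.zero_le d), if_pos rfl, Matrix.smul_apply, smul_eq_mul, he u hu v]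
    field_simp
  · intro j hj hj0
    rw [hval j (Nat.lt_succ_iff.mp (mem_range.mp hj)), if_neg hj0, zero_smul, Matrix.zero_apply]

lemma aeval_eq_zero_of_lt_dist (h : IsSpectralSide G d lam E S p g) {i : ℕ} (hi : i ≤ d)
    {u v : V} (huv : i < G.dist u v) : aeval (G.adjMatrix ℝ) (p i) u v = 0 :=
  aeval_adjMatrix_apply_eq_zero (by
    rw [h.predist.degree i hi]
    exact_mod_cast huv)

lemma dist_le (h : IsSpectralSide G d lam E S p g) {u : V} (hu : u ∈ S) (v : V) :
    G.dist u v ≤ d := by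
  by_contra! hlt
  have := h.sum_aeval_apply hu v
  rw [Finset.sum_eq_zero fun j hj => h.aeval_eq_zero_of_lt_dist
    (Nat.lt_succ_iff.mp (mem_range.mp hj)) (lt_of_lt_of_le (mem_range.mp hj) hlt)] at this
  exact (h.pos _).ne this

/-- If `p j (A)` is supported at distance `j` for all `j > i`, then the entries of `p i (A)` at
distance `i` are those of the Hoffman matrix. -/
lemma aeval_apply_of_dist_eq (h : IsSpectralSide G d lam E S p g) {i : ℕ} {u v : V}
    (hu : u ∈ S) (huv : G.dist u v = i)
    (hsupp : ∀ j ≤ d, i < j → aeval (G.adjMatrix ℝ) (p j) u v = 0) :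
    aeval (G.adjMatrix ℝ) (p i) u v = g i := by
  have hi : i ≤ d := huv ▸ h.dist_le hu v
  rw [← huv, ← h.sum_aeval_apply hu v, huv, Finset.sum_eq_single_of_mem i (by simp; omega)]
  intro j hj hji
  have hj' := Nat.lt_succ_iff.mp (mem_range.mp hj)
  rcases lt_or_gt_of_ne hji with hlt | hgt
  · exact h.aeval_eq_zero_of_lt_dist hj' (by omega)
  · exact hsupp j hj' hgt

lemma aeval_last_apply (h : IsSpectralSide G d lam E S p g) {u v : V} (hu : u ∈ S)
    (huv : G.dist u v = d) : aeval (G.adjMatrix ℝ) (p d) u v = 1 := by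
  rw [h.aeval_apply_of_dist_eq hu huv fun j hj hlt => by omega, h.last]

/-- The spectral excess characterization: the average excess attains `p d (lam 0)` exactly when
`p d (A)` is the distance-`d` matrix on the rows indexed by `S`. -/
lemma excess_eq_iff (h : IsSpectralSide G d lam E S p g) :
    (1 / (S.card : ℝ)) * ∑ u ∈ S, ((sphere G u d).card : ℝ) = (p d).eval (lam 0) ↔
      ∀ u ∈ S, ∀ v, aeval (G.adjMatrix ℝ) (p d) u v = if G.dist u v = d then 1 else 0 := by
  have hS := h.card_pos
  have hnorm : ∑ u ∈ S, ∑ v, aeval (G.adjMatrix ℝ) (p d) u v ^ 2 =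
      S.card * (p d).eval (lam 0) := by
    rw [← h.predist.norm d le_rfl, h.spec.discInner_eq, mul_div_cancel₀ _ hS.ne']
    simp only [sq]
  have hdiff : ∑ u ∈ S, ∑ v,
      (aeval (G.adjMatrix ℝ) (p d) u v - if G.dist u v = d then 1 else 0) ^ 2 =
      S.card * (p d).eval (lam 0) - ∑ u ∈ S, ((sphere G u d).card : ℝ) := by
    rw [← hnorm, ← Finset.sum_sub_distrib]
    refine Finset.sum_congr rfl fun u hu => ?_
    rw [sphere, Finset.card_filter, Nat.cast_sum, ← Finset.sum_sub_distrib]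
    refine Finset.sum_congr rfl fun v _ => ?_
    split_ifs with huv
    · rw [h.aeval_last_apply hu huv]
      norm_num
    · simp
  have hiff : (1 / (S.card : ℝ)) * ∑ u ∈ S, ((sphere G u d).card : ℝ) = (p d).eval (lam 0) ↔
      S.card * (p d).eval (lam 0) - ∑ u ∈ S, ((sphere G u d).card : ℝ) = 0 := by
    rw [sub_eq_zero, one_div, inv_mul_eq_iff_eq_mul₀ hS.ne', eq_comm]
  rw [hiff, ← hdiff, Finset.sum_eq_zero_iff_of_nonneg fun u _ =>
    Finset.sum_nonneg fun v _ => sq_nonneg _]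
  refine forall₂_congr fun u _ => ?_
  rw [Finset.sum_eq_zero_iff_of_nonneg fun v _ => sq_nonneg _]
  simp [sub_eq_zero]

lemma aeval_eq_sum_coef (h : IsSpectralSide G d lam E S p g) (f : Polynomial ℝ) (u v : V) :
    aeval (G.adjMatrix ℝ) f u v = ∑ j ∈ range (d + 1),
      IsPredistance.coef d lam (avgMult E S) p f j * aeval (G.adjMatrix ℝ) (p j) u v := by
  rw [h.spec.aeval_congr fun i hi => h.predist.eval_eq_sum_coef f hi]
  simp [Matrix.sum_apply]

/-- If `p d (A)` is the distance-`d` matrix on the rows indexed by `S`, then each `p i (A)` is a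
scaled distance-`i` matrix there. -/
lemma aeval_apply_of_last (h : IsSpectralSide G d lam E S p g)
    (hlast : ∀ u ∈ S, ∀ v,
      aeval (G.adjMatrix ℝ) (p d) u v = if G.dist u v = d then 1 else 0)
    {i : ℕ} (hi : i ≤ d) :
    ∀ u ∈ S, ∀ v, aeval (G.adjMatrix ℝ) (p i) u v = if G.dist u v = i then g i else 0 := by
  induction hk : d - i using Nat.strong_induction_on generalizing i with
  | _ k ih =>
  subst hk
  intro u hu v
  have hgt : ∀ j ≤ d, i < j → ∀ v,
      aeval (G.adjMatrix ℝ) (p j) u v = if G.dist u v = j then g j else 0 :=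
    fun j hj hij v => ih (d - j) (by omega) hj rfl u hu v
  rcases hi.eq_or_lt with rfl | hid
  · rw [hlast u hu v, h.last]
  rcases lt_trichotomy (G.dist u v) i with hlt | heq | hlt
  · rw [if_neg hlt.ne]
    have hX := h.aeval_eq_sum_coef (p (i + 1) * X) u v
    rw [aeval_adjMatrix_mul_X_apply, Finset.sum_eq_zero, Finset.sum_eq_single_of_mem i
      (by simp; omega)] at hX
    · exact (mul_eq_zero.mp hX.symm).resolve_left (h.predist.coef_mul_X_ne_zero hid)
    · intro j hj hji
      have hj' := Nat.lt_succ_iff.mp (mem_range.mp hj)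
      rcases lt_or_gt_of_ne hji with hji | hji
      · rw [h.predist.coef_mul_X_of_add_one_lt hid (by omega), zero_mul]
      · rw [hgt j hj' hji v, if_neg (by omega), mul_zero]
    · intro w hw
      have hdist := (h.connected.dist_triangle (u := u) (v := v) (w := w))
      have hvw := SimpleGraph.dist_eq_one_iff_adj.mpr ((G.mem_neighborFinset v w).mp hw)
      rw [hgt (i + 1) hid (by omega) w, if_neg (by omega)]
  · rw [if_pos heq]
    exact h.aeval_apply_of_dist_eq hu heq fun j hj hij => by
      rw [hgt j hj hij v, if_neg (by omega)]
  · rw [if_neg hlt.ne', h.aeval_eq_zero_of_lt_dist hi hlt]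

/-- The number of neighbours of `v` at distance `i` from `u ∈ S` depends only on `i` and on the
distance from `u` to `v`. -/
lemma card_sphere_inter_of_last (h : IsSpectralSide G d lam E S p g)
    (hlast : ∀ u ∈ S, ∀ v,
      aeval (G.adjMatrix ℝ) (p d) u v = if G.dist u v = d then 1 else 0) :
    ∃ N : ℕ → ℕ → ℕ, ∀ u ∈ S, ∀ v i,
      (sphere G u i ∩ G.neighborFinset v).card = N i (G.dist u v) := by
  refine ⟨fun i k => if i ≤ d then
    ⌊IsPredistance.coef d lam (avgMult E S) p (p i * X) k * g k / g i⌋₊ else 0, ?_⟩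
  intro u hu v i
  dsimp only
  split_ifs with hi
  · have hX := h.aeval_eq_sum_coef (p i * X) u v
    rw [aeval_adjMatrix_mul_X_apply, Finset.sum_eq_single_of_mem (G.dist u v)
      (mem_range.mpr (Nat.lt_succ_of_le (h.dist_le hu v))),
      h.aeval_apply_of_last hlast (h.dist_le hu v) u hu v, if_pos rfl,
      Finset.sum_congr rfl fun w _ => h.aeval_apply_of_last hlast hi u hu w,
      ← Finset.sum_filter, Finset.sum_const, nsmul_eq_mul] at hX
    · rw [← hX, mul_div_cancel_right₀ _ (h.pos i).ne', Nat.floor_natCast]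
      congr 1
      ext w
      simp [sphere, and_comm]
    · intro j hj hjk
      rw [h.aeval_apply_of_last hlast (Nat.lt_succ_iff.mp (mem_range.mp hj)) u hu v,
        if_neg hjk.symm, mul_zero]
  · rw [Finset.card_eq_zero, Finset.eq_empty_iff_forall_notMem]
    intro w hw
    simp only [sphere, mem_inter, mem_filter, mem_univ, true_and] at hw
    have := h.dist_le hu w
    omega

/-- Intersection numbers around the vertices of `S` produce polynomials of every degree `i ≤ d`
whose values at `A` are the distance-`i` matrices on the rows indexed by `S`. -/
lemma exists_distance_polynomial (h : IsSpectralSide G d lam E S p g) {c b : ℕ → ℕ}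
    (hcb : ∀ u ∈ S, ∀ v : V,
      (sphere G u (G.dist u v - 1) ∩ G.neighborFinset v).card = c (G.dist u v) ∧
      (sphere G u (G.dist u v + 1) ∩ G.neighborFinset v).card = b (G.dist u v))
    {i : ℕ} (hi : i ≤ d) :
    ∃ q : Polynomial ℝ, q.degree = i ∧ ∀ u ∈ S, ∀ v,
      aeval (G.adjMatrix ℝ) q u v = if G.dist u v = i then 1 else 0 := by
  have hcard : ∀ i, ∀ u ∈ S, ∀ v, ∑ w ∈ G.neighborFinset v,
      (if G.dist u w = i then (1 : ℝ) else 0) =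
        if G.dist u v = i + 1 then (c (i + 1) : ℝ)
        else if G.dist u v + 1 = i then (b (G.dist u v) : ℝ) else 0 := by
    intro i u hu v
    have hset : ∑ w ∈ G.neighborFinset v, (if G.dist u w = i then (1 : ℝ) else 0) =
        ((sphere G u i ∩ G.neighborFinset v).card : ℝ) := by
      rw [← Finset.sum_filter, Finset.sum_const, nsmul_eq_mul, mul_one]
      congr 2
      ext w
      simp [sphere, and_comm]
    rw [hset]
    split_ifs with h1 h2
    · rw [← h1, ← (hcb u hu v).1, h1, Nat.add_sub_cancel]
    · rw [← (hcb u hu v).2, h2]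
    · rw [Nat.cast_eq_zero, Finset.card_eq_zero, Finset.eq_empty_iff_forall_notMem]
      intro w hw
      simp only [sphere, mem_inter, mem_filter, mem_univ, true_and,
        SimpleGraph.mem_neighborFinset] at hw
      have hne := h.dist_ne u hu v w hw.2
      have h3 := h.connected.dist_triangle (u := u) (v := v) (w := w)
      have h4 := h.connected.dist_triangle (u := u) (v := w) (w := v)
      have h5 := SimpleGraph.dist_eq_one_iff_adj.mpr hw.2
      have h6 := SimpleGraph.dist_eq_one_iff_adj.mpr hw.2.symm
      omega
  have hstep : ∀ i < d, ∀ f : Polynomial ℝ, f.degree = ((i + 1 : ℕ) : WithBot ℕ) →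
      (∀ u ∈ S, ∀ v, aeval (G.adjMatrix ℝ) f u v =
        if G.dist u v = i + 1 then (c (i + 1) : ℝ) else 0) →
      ∃ q : Polynomial ℝ, q.degree = ((i + 1 : ℕ) : WithBot ℕ) ∧ ∀ u ∈ S, ∀ v,
        aeval (G.adjMatrix ℝ) q u v = if G.dist u v = i + 1 then 1 else 0 := by
    intro i hi f hf hval
    have hc : (c (i + 1) : ℝ) ≠ 0 := by
      intro hc
      have hf0 : f = 0 := by
        refine eq_zero_of_discInner_self_eq_zero h.predist.anti h.predist.pos
          (hf.le.trans (by exact_mod_cast hi)) ?_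
        rw [h.spec.discInner_eq, Finset.sum_eq_zero, zero_div]
        intro u hu
        refine Finset.sum_eq_zero fun v _ => ?_
        rw [hval u hu v, hc]
        simp
      rw [hf0, degree_zero] at hf
      exact WithBot.bot_ne_natCast _ hf
    refine ⟨(c (i + 1) : ℝ)⁻¹ • f, ?_, fun u hu v => ?_⟩
    · rw [smul_eq_C_mul, degree_C_mul (inv_ne_zero hc), hf]
    · rw [map_smul, Matrix.smul_apply, hval u hu v]
      split_ifs <;> simp [hc]
  induction i using Nat.twoStepInduction with
  | zero =>
    refine ⟨1, by simp, fun u hu v => ?_⟩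
    simp [Matrix.one_apply, h.connected.dist_eq_zero_iff]
  | one =>
    refine hstep 0 hi X degree_X fun u hu v => ?_
    have h0 := hcard 0 u hu v
    rw [← one_mul X, aeval_adjMatrix_mul_X_apply]
    simpa [Matrix.one_apply, h.connected.dist_eq_zero_iff] using h0
  | more i ih0 ih1 =>
    obtain ⟨q0, hq0, hv0⟩ := ih0 (by omega)
    obtain ⟨q1, hq1, hv1⟩ := ih1 (by omega)
    refine hstep (i + 1) (by omega) (q1 * X - (b i : ℝ) • q0) ?_ fun u hu v => ?_
    · have hX : (q1 * X).degree = ((i + 1 + 1 : ℕ) : WithBot ℕ) := by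
        rw [degree_mul, hq1, degree_X]
        rfl
      rw [degree_sub_eq_left_of_degree_lt, hX]
      rw [hX]
      refine (degree_smul_le _ _).trans_lt ?_
      rw [hq0]
      exact_mod_cast (by omega : i < i + 1 + 1)
    · rw [map_sub, Matrix.sub_apply, aeval_adjMatrix_mul_X_apply,
        Finset.sum_congr rfl fun w _ => hv1 u hu w, hcard (i + 1) u hu v, map_smul, Matrix.smul_apply, hv0 u hu v]
      split_ifs with h1 h2 h3 h4 <;> first | omega | skip
      · simp
      · simp [h4]
      · simp

lemma last_of_distance_polynomial (h : IsSpectralSide G d lam E S p g) {q : Polynomial ℝ}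
    (hq : q.degree = d)
    (hval : ∀ u ∈ S, ∀ v,
      aeval (G.adjMatrix ℝ) q u v = if G.dist u v = d then 1 else 0) :
    ∀ u ∈ S, ∀ v, aeval (G.adjMatrix ℝ) (p d) u v = if G.dist u v = d then 1 else 0 := by
  set s := (p d).coeff d / q.coeff d
  have hlt : (p d - s • q).degree < d := degree_sub_smul_lt hq (h.predist.degree d le_rfl).le
  have horth : ∀ f : Polynomial ℝ, f.degree < d →
      discInner (range (d + 1)) lam (avgMult E S) q f = 0 := by
    intro f hf
    rw [h.spec.discInner_eq, Finset.sum_eq_zero, zero_div]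
    intro u hu
    refine Finset.sum_eq_zero fun v _ => ?_
    rw [hval u hu v]
    split_ifs with huv
    · rw [aeval_adjMatrix_apply_eq_zero (huv ▸ hf), mul_zero]
    · rw [zero_mul]
  have hps : p d = s • q := by
    rw [← sub_eq_zero]
    refine eq_zero_of_discInner_self_eq_zero h.predist.anti h.predist.pos hlt.le ?_
    rw [← discInnerLeft_apply, map_sub, map_smul, discInnerLeft_apply, discInnerLeft_apply,
      horth _ hlt, discInner_comm, h.predist.discInner_eq_zero_of_degree_lt le_rfl hlt]
    simp
  intro u hu v
  split_ifs with huv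
  · exact h.aeval_last_apply hu huv
  · rw [hps, map_smul, Matrix.smul_apply, hval u hu v, if_neg huv, smul_zero]

/-- The spectral excess theorem around the vertices of `S`. -/
theorem exists_intersection_numbers_iff (h : IsSpectralSide G d lam E S p g) :
    (∃ c b : ℕ → ℕ, ∀ u ∈ S, ∀ v : V,
      (sphere G u (G.dist u v - 1) ∩ G.neighborFinset v).card = c (G.dist u v) ∧
      (sphere G u (G.dist u v + 1) ∩ G.neighborFinset v).card = b (G.dist u v)) ↔
    (1 / (S.card : ℝ)) * ∑ u ∈ S, ((sphere G u d).card : ℝ) = (p d).eval (lam 0) := by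
  rw [h.excess_eq_iff]
  constructor
  · rintro ⟨c, b, hcb⟩
    obtain ⟨q, hq, hval⟩ := h.exists_distance_polynomial hcb le_rfl
    exact h.last_of_distance_polynomial hq hval
  · intro hlast
    obtain ⟨N, hN⟩ := h.card_sphere_inter_of_last hlast
    exact ⟨fun k => N (k - 1) k, fun k => N (k + 1) k, fun u hu v => ⟨hN u hu v _, hN u hu v _⟩⟩

end IsSpectralSide

end SpectralExcess

section Bipartite

lemma even_dist_iff_mem {V : Type*} [Fintype V] [DecidableEq V] {G : SimpleGraph V}
    {V1 V2 : Finset V} (hconn : G.Connected) (hcover : V1 ∪ V2 = univ)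
    (hind1 : ∀ u ∈ V1, ∀ v ∈ V1, ¬ G.Adj u v) (hind2 : ∀ u ∈ V2, ∀ v ∈ V2, ¬ G.Adj u v)
    {u : V} (hu : u ∈ V1) (v : V) : Even (G.dist u v) ↔ v ∈ V1 := by
  have hmem2 : ∀ w, w ∉ V1 → w ∈ V2 := fun w hw =>
    (mem_union.mp (hcover ▸ mem_univ w)).resolve_left hw
  let c : G.Coloring Bool := SimpleGraph.Coloring.mk (fun v => decide (v ∈ V1)) (by
    intro v w hvw heq
    rw [decide_eq_decide] at heq
    by_cases hv : v ∈ V1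
    · exact hind1 v hv w (heq.mp hv) hvw
    · exact hind2 v (hmem2 v hv) w (hmem2 w fun hw => hv (heq.mpr hw)) hvw)
  obtain ⟨p, hp⟩ := hconn.exists_walk_length_eq_dist u v
  have hcu : c u = true := decide_eq_true hu
  have hcv : c v = true ↔ v ∈ V1 := decide_eq_true_iff
  rw [← hp, c.even_length_iff_congr p, ← hcv]
  simp [hcu]

variable {V : Type*} [Fintype V] [DecidableEq V] {G : SimpleGraph V} [DecidableRel G.Adj]
  {d : ℕ} {lam : ℕ → ℝ} {E : ℕ → Matrix V V ℝ}

namespace IsSpectralDecomposition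

lemma mul_adjMatrix (hE : IsSpectralDecomposition G d lam E) {i : ℕ} (hi : i ≤ d) :
    E i * G.adjMatrix ℝ = lam i • E i := by
  have h := congrArg Matrix.transpose (hE.eig i hi)
  rwa [Matrix.transpose_mul, Matrix.transpose_smul, hE.symm i hi,
    SimpleGraph.transpose_adjMatrix] at h

/-- An eigenvalue of the adjacency matrix with a nonzero eigenvector is at most `lam 0`. -/
lemma le_lam_zero (hE : IsSpectralDecomposition G d lam E) {x : V → ℝ} {μ : ℝ} (hx0 : x ≠ 0)
    (hx : G.adjMatrix ℝ *ᵥ x = μ • x) : μ ≤ lam 0 := by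
  by_contra! hlt
  refine hx0 ?_
  rw [← Matrix.one_mulVec x, ← hE.sum, Matrix.sum_mulVec]
  refine Finset.sum_eq_zero fun j hj => ?_
  have hj' := Nat.lt_succ_iff.mp (mem_range.mp hj)
  have h1 : μ • (E j *ᵥ x) = lam j • (E j *ᵥ x) := by
    rw [← Matrix.mulVec_smul, ← hx, Matrix.mulVec_mulVec, hE.mul_adjMatrix hj',
      Matrix.smul_mulVec]
  have h2 : lam j ≤ lam 0 :=
    hE.anti.antitoneOn (Set.mem_Iic.mpr (Nat.zero_le d)) (Set.mem_Iic.mpr hj') (Nat.zero_le j)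
  rw [← sub_eq_zero, ← sub_smul] at h1
  exact (smul_eq_zero.mp h1).resolve_left (by linarith)

/-- In a connected graph with a positive eigenvector `x`, the idempotent of the largest
eigenvalue is a multiple of `x xᵀ`. -/
lemma exists_perron (hE : IsSpectralDecomposition G d lam E) (hconn : G.Connected)
    {x : V → ℝ} {μ : ℝ} (hpos : ∀ v, 0 < x v) (hx : G.adjMatrix ℝ *ᵥ x = μ • x) :
    ∃ c : ℝ, ∀ u v, E 0 u v = c * x u * x v := by
  obtain ⟨o⟩ := hconn.nonempty
  have hμ : μ ≤ lam 0 := hE.le_lam_zero (fun h => (hpos o).ne' (congrFun h o)) hx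
  have hxs : ∀ u, ∑ v, G.adjMatrix ℝ u v * x v = μ * x u := fun u => congrFun hx u
  have hcol : ∀ w u, E 0 u w / x u = E 0 o w / x o := by
    intro w
    set t : V → ℝ := fun u => E 0 u w / x u
    have ht : ∀ u, E 0 u w = t u * x u := fun u => by
      simp only [t]
      field_simp [(hpos u).ne']
    have hEs : ∀ u, ∑ v, G.adjMatrix ℝ u v * (t v * x v) = lam 0 * (t u * x u) := by
      intro u
      have := congrFun (congrFun (hE.eig 0 (Nat.zero_le d)) u) w
      rw [Matrix.mul_apply, Matrix.smul_apply, smul_eq_mul] at this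
      simpa only [ht] using this
    have hterm : ∀ u v, 0 ≤ G.adjMatrix ℝ u v * x u * x v * (t u - t v) ^ 2 := by
      intro u v
      have : 0 ≤ G.adjMatrix ℝ u v := by
        rw [SimpleGraph.adjMatrix_apply]
        split_ifs <;> norm_num
      have := (hpos u).le
      have := (hpos v).le
      positivity
    have h1 : ∑ u, ∑ v, G.adjMatrix ℝ u v * x u * x v * t u ^ 2 = μ * ∑ u, (t u * x u) ^ 2 := by
      rw [Finset.mul_sum]
      refine Finset.sum_congr rfl fun u _ => ?_
      calc ∑ v, G.adjMatrix ℝ u v * x u * x v * t u ^ 2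
          = x u * t u ^ 2 * ∑ v, G.adjMatrix ℝ u v * x v := by
            rw [Finset.mul_sum]
            exact Finset.sum_congr rfl fun v _ => by ring
        _ = μ * (t u * x u) ^ 2 := by rw [hxs]; ring
    have h2 : ∑ u, ∑ v, G.adjMatrix ℝ u v * x u * x v * t v ^ 2 = μ * ∑ u, (t u * x u) ^ 2 := by
      rw [← h1, Finset.sum_comm]
      refine Finset.sum_congr rfl fun u _ => Finset.sum_congr rfl fun v _ => ?_
      rw [(G.isSymm_adjMatrix (α := ℝ)).apply]
      ring
    have h3 : ∑ u, ∑ v, G.adjMatrix ℝ u v * x u * x v * (t u * t v) =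
        lam 0 * ∑ u, (t u * x u) ^ 2 := by
      rw [Finset.mul_sum]
      refine Finset.sum_congr rfl fun u _ => ?_
      calc ∑ v, G.adjMatrix ℝ u v * x u * x v * (t u * t v)
          = x u * t u * ∑ v, G.adjMatrix ℝ u v * (t v * x v) := by
            rw [Finset.mul_sum]
            exact Finset.sum_congr rfl fun v _ => by ring
        _ = lam 0 * (t u * x u) ^ 2 := by rw [hEs]; ring
    have hsum : ∑ u, ∑ v, G.adjMatrix ℝ u v * x u * x v * (t u - t v) ^ 2 =
        2 * (μ - lam 0) * ∑ u, (t u * x u) ^ 2 := by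
      calc _ = ∑ u, ∑ v, G.adjMatrix ℝ u v * x u * x v * t u ^ 2 +
            ∑ u, ∑ v, G.adjMatrix ℝ u v * x u * x v * t v ^ 2 -
            2 * ∑ u, ∑ v, G.adjMatrix ℝ u v * x u * x v * (t u * t v) := by
            simp only [Finset.mul_sum, ← Finset.sum_add_distrib, ← Finset.sum_sub_distrib]
            exact Finset.sum_congr rfl fun u _ => Finset.sum_congr rfl fun v _ => by ring
        _ = _ := by rw [h1, h2, h3]; ring
    have hnn : 0 ≤ ∑ u, (t u * x u) ^ 2 := Finset.sum_nonneg fun _ _ => sq_nonneg _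
    have hzero : ∑ u, ∑ v, G.adjMatrix ℝ u v * x u * x v * (t u - t v) ^ 2 = 0 :=
      le_antisymm (hsum ▸ mul_nonpos_of_nonpos_of_nonneg (by linarith) hnn)
        (Finset.sum_nonneg fun u _ => Finset.sum_nonneg fun v _ => hterm u v)
    have hadj : ∀ u v, G.Adj u v → t u = t v := by
      intro u v huv
      have h4 := (Finset.sum_eq_zero_iff_of_nonneg fun u _ =>
        Finset.sum_nonneg fun v _ => hterm u v).mp hzero u (mem_univ u)
      have h5 := (Finset.sum_eq_zero_iff_of_nonneg fun v _ => hterm u v).mp h4 v (mem_univ v)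
      simpa [huv, (hpos u).ne', (hpos v).ne', sub_eq_zero] using h5
    intro u
    obtain ⟨p⟩ := hconn u o
    induction p with
    | nil => rfl
    | cons huv _ ih => exact (hadj _ _ huv).trans ih
  have hmul : ∀ u w, E 0 u w = E 0 o w / x o * x u := fun u w => by
    rw [← hcol w u, div_mul_cancel₀ _ (hpos u).ne']
  refine ⟨E 0 o o / x o / x o, fun u v => ?_⟩
  rw [hmul u v, (hE.symm 0 (Nat.zero_le d)).apply v o, hmul v o]
  ring

variable {V1 V2 : Finset V}

lemma trace_sign_mul (hE : IsSpectralDecomposition G d lam E) (hcover : V1 ∪ V2 = univ)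
    (hind1 : ∀ u ∈ V1, ∀ v ∈ V1, ¬ G.Adj u v) (hind2 : ∀ u ∈ V2, ∀ v ∈ V2, ¬ G.Adj u v)
    {j : ℕ} (hj : j ≤ d) (hne : lam j ≠ 0) :
    (Matrix.diagonal (fun u => if u ∈ V1 then (1 : ℝ) else -1) * E j).trace = 0 := by
  set D := Matrix.diagonal (fun u => if u ∈ V1 then (1 : ℝ) else -1)
  have hanti : D * G.adjMatrix ℝ = -(G.adjMatrix ℝ * D) := by
    ext u v
    rw [Matrix.neg_apply, Matrix.diagonal_mul, Matrix.mul_diagonal, SimpleGraph.adjMatrix_apply]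
    by_cases huv : G.Adj u v
    · have h2 : ∀ w, w ∉ V1 → w ∈ V2 := fun w hw =>
        (mem_union.mp (hcover ▸ mem_univ w)).resolve_left hw
      by_cases hu : u ∈ V1 <;> by_cases hv : v ∈ V1
      · exact absurd huv (hind1 u hu v hv)
      · simp [hu, hv]
      · simp [hu, hv, huv]
      · exact absurd huv (hind2 u (h2 u hu) v (h2 v hv))
    · simp [huv]
  have h : lam j * (D * E j).trace = -(lam j * (D * E j).trace) := by
    calc lam j * (D * E j).trace = (D * (G.adjMatrix ℝ * E j)).trace := by
          rw [hE.eig j hj, Matrix.mul_smul, Matrix.trace_smul, smul_eq_mul]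
      _ = -(G.adjMatrix ℝ * (D * E j)).trace := by
          rw [← Matrix.mul_assoc, hanti, Matrix.neg_mul, Matrix.trace_neg, Matrix.mul_assoc]
      _ = -(lam j * (D * E j).trace) := by
          rw [Matrix.trace_mul_comm, Matrix.mul_assoc, hE.mul_adjMatrix hj, Matrix.mul_smul,
            Matrix.trace_smul, smul_eq_mul]
  have h0 : lam j * (D * E j).trace = 0 := by linarith
  exact (mul_eq_zero.mp h0).resolve_left hne

/-- In a bipartite graph whose kernel is not supported on one stable set, all averaged local
multiplicities are positive. -/
lemma avgMult_pos (hE : IsSpectralDecomposition G d lam E) (hcover : V1 ∪ V2 = univ)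
    (hdisj : Disjoint V1 V2)
    (hind1 : ∀ u ∈ V1, ∀ v ∈ V1, ¬ G.Adj u v) (hind2 : ∀ u ∈ V2, ∀ v ∈ V2, ¬ G.Adj u v)
    (hm0 : ∑ i ∈ (range (d + 1)).filter (fun i => lam i = 0), Matrix.trace (E i) ≠
      |(V1.card : ℝ) - (V2.card : ℝ)|) {i : ℕ} (hi : i ≤ d) : 0 < avgMult E V1 i := by
  have hdiag : ∀ u, 0 ≤ E i u u := fun u => by
    rw [hE.apply_self_eq_sum_sq hi]
    exact Finset.sum_nonneg fun _ _ => sq_nonneg _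
  have hmem2 : ∀ w, w ∉ V1 → w ∈ V2 := fun w hw =>
    (mem_union.mp (hcover ▸ mem_univ w)).resolve_left hw
  by_contra hle
  have hdiag0 : ∀ u ∈ V1, E i u u = 0 := by
    intro u hu
    have hcard : (0 : ℝ) < V1.card := by exact_mod_cast Finset.card_pos.mpr ⟨u, hu⟩
    have hsum : ∑ u ∈ V1, E i u u = 0 := by
      refine le_antisymm ?_ (Finset.sum_nonneg fun u _ => hdiag u)
      by_contra! hlt
      exact hle (div_pos hlt hcard)
    exact (Finset.sum_eq_zero_iff_of_nonneg fun u _ => hdiag u).mp hsum u hu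
  have hrow : ∀ u ∈ V1, ∀ v, E i u v = 0 := by
    intro u hu v
    have h := hdiag0 u hu
    rw [hE.apply_self_eq_sum_sq hi] at h
    exact pow_eq_zero_iff two_ne_zero |>.mp
      ((Finset.sum_eq_zero_iff_of_nonneg fun _ _ => sq_nonneg _).mp h v (mem_univ v))
  by_cases h0 : lam i = 0
  · have hinj : ∀ j ≤ d, j ≠ i → lam j ≠ 0 := fun j hj hji hj0 =>
      hji (hE.anti.injOn (Set.mem_Iic.mpr hj) (Set.mem_Iic.mpr hi) (hj0.trans h0.symm))
    set D := Matrix.diagonal (fun u => if u ∈ V1 then (1 : ℝ) else -1)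
    have htrD : D.trace = V1.card - V2.card := by
      have hV2 : univ.filter (fun u => u ∉ V1) = V2 := by
        ext w
        simp only [mem_filter, mem_univ, true_and]
        exact ⟨hmem2 w, fun h2 h1 => Finset.disjoint_left.mp hdisj h1 h2⟩
      rw [Matrix.trace_diagonal, Finset.sum_ite]
      rw [hV2, Finset.filter_mem_eq_inter, Finset.univ_inter]
      simp
      ring
    have htr : D.trace = -(E i).trace := by
      rw [← mul_one D, ← hE.sum, Finset.mul_sum, Matrix.trace_sum,
        Finset.sum_eq_single_of_mem i (mem_range.mpr (by omega))]
      · rw [Matrix.trace, Matrix.trace, ← Finset.sum_neg_distrib]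
        refine Finset.sum_congr rfl fun u _ => ?_
        rw [Matrix.diag_apply, Matrix.diag_apply, Matrix.diagonal_mul]
        split_ifs with hu
        · simp [hdiag0 u hu]
        · ring
      · intro j hj hji
        have hj' := Nat.lt_succ_iff.mp (mem_range.mp hj)
        exact hE.trace_sign_mul hcover hind1 hind2 hj' (hinj j hj' hji)
    have hfilter : (range (d + 1)).filter (fun i => lam i = 0) = {i} := by
      ext j
      simp only [mem_filter, mem_range, mem_singleton]
      constructor
      · rintro ⟨hj, hj0⟩
        by_contra hji
        exact hinj j (by omega) hji hj0
      · rintro rfl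
        exact ⟨by omega, h0⟩
    have hnn : 0 ≤ (E i).trace := Finset.sum_nonneg fun u _ => hdiag u
    rw [hfilter, Finset.sum_singleton, ← htrD, htr, abs_neg, abs_of_nonneg hnn] at hm0
    exact hm0 rfl
  · refine hE.ne_zero i hi ?_
    ext v w
    by_cases hv : v ∈ V1
    · exact hrow v hv w
    · have h := congrFun (congrFun (hE.eig i hi) v) w
      rw [SimpleGraph.adjMatrix_mul_apply, Matrix.smul_apply, smul_eq_mul,
        Finset.sum_eq_zero] at h
      · exact (mul_eq_zero.mp h.symm).resolve_left h0
      · intro u hu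
        refine hrow u ?_ w
        by_contra hu1
        exact hind2 v (hmem2 v hv) u (hmem2 u hu1) ((G.mem_neighborFinset v u).mp hu)

end IsSpectralDecomposition

variable {V1 V2 : Finset V}

/-- A stable set of a connected semiregular bipartite graph carries the data of the spectral
excess theorem. -/
lemma IsSpectralDecomposition.isSpectralSide (hE : IsSpectralDecomposition G d lam E)
    (hconn : G.Connected) (hcover : V1 ∪ V2 = univ) (hdisj : Disjoint V1 V2)
    (hind1 : ∀ u ∈ V1, ∀ v ∈ V1, ¬ G.Adj u v) (hind2 : ∀ u ∈ V2, ∀ v ∈ V2, ¬ G.Adj u v)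
    {δ1 δ2 : ℕ} (hdeg1 : ∀ u ∈ V1, G.degree u = δ1) (hdeg2 : ∀ v ∈ V2, G.degree v = δ2)
    (hEven : Even d)
    (hm0 : ∑ i ∈ (range (d + 1)).filter (fun i => lam i = 0), Matrix.trace (E i) ≠
      |(V1.card : ℝ) - (V2.card : ℝ)|)
    {p : ℕ → Polynomial ℝ} (hpdeg : ∀ i ≤ d, (p i).degree = (i : WithBot ℕ))
    (hporth : ∀ i ≤ d, ∀ j ≤ d, i ≠ j →
      discInner (range (d + 1)) lam (avgMult E V1) (p i) (p j) = 0)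
    (hpnorm : ∀ i ≤ d,
      discInner (range (d + 1)) lam (avgMult E V1) (p i) (p i) = (p i).eval (lam 0)) :
    IsSpectralSide G d lam E V1 p (fun k => if Even k then 1 else √δ2 / √δ1) := by
  have hw1 : ∀ i ≤ d, 0 < avgMult E V1 i := fun i hi =>
    hE.avgMult_pos hcover hdisj hind1 hind2 hm0 hi
  have hw2 : 0 < avgMult E V2 0 :=
    hE.avgMult_pos (union_comm V1 V2 ▸ hcover) hdisj.symm hind2 hind1
      (abs_sub_comm (V1.card : ℝ) V2.card ▸ hm0) (Nat.zero_le d)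
  obtain ⟨u1, hu1⟩ : V1.Nonempty := by
    rw [Finset.nonempty_iff_ne_empty]
    rintro rfl
    simpa [avgMult] using hw1 0 (Nat.zero_le d)
  obtain ⟨u2, hu2⟩ : V2.Nonempty := by
    rw [Finset.nonempty_iff_ne_empty]
    rintro rfl
    simp [avgMult] at hw2
  have hmem2 : ∀ w, w ∉ V1 → w ∈ V2 := fun w hw =>
    (mem_union.mp (hcover ▸ mem_univ w)).resolve_left hw
  have : Nontrivial V := ⟨u1, u2, fun h => Finset.disjoint_left.mp hdisj hu1 (h ▸ hu2)⟩
  have hδ1 : (0 : ℝ) < √δ1 := by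
    rw [Real.sqrt_pos, ← hdeg1 u1 hu1]
    exact_mod_cast hconn.preconnected.degree_pos_of_nontrivial u1
  have hδ2 : (0 : ℝ) < √δ2 := by
    rw [Real.sqrt_pos, ← hdeg2 u2 hu2]
    exact_mod_cast hconn.preconnected.degree_pos_of_nontrivial u2
  have hparity : ∀ {u : V}, u ∈ V1 → ∀ v, Even (G.dist u v) ↔ v ∈ V1 :=
    even_dist_iff_mem hconn hcover hind1 hind2
  set x : V → ℝ := fun v => if v ∈ V1 then √δ1 else √δ2 with hxdef
  obtain ⟨c, hc⟩ := hE.exists_perron hconn (x := x) (μ := √δ1 * √δ2)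
    (fun v => by simp only [x]; split_ifs <;> assumption) (by
      ext v
      rw [SimpleGraph.adjMatrix_mulVec_apply, Pi.smul_apply, smul_eq_mul]
      by_cases hv : v ∈ V1
      · have hnb : ∀ w ∈ G.neighborFinset v, x w = √δ2 := fun w hw =>
          if_neg fun hw1 => hind1 v hv w hw1 ((G.mem_neighborFinset v w).mp hw)
        rw [Finset.sum_congr rfl hnb, Finset.sum_const, G.card_neighborFinset_eq_degree,
          hdeg1 v hv, nsmul_eq_mul, hxdef]
        simp only [hv, if_true]
        nlinarith [Real.mul_self_sqrt (Nat.cast_nonneg (α := ℝ) δ1)]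
      · have hnb : ∀ w ∈ G.neighborFinset v, x w = √δ1 := fun w hw =>
          if_pos (by
            by_contra hw1
            exact hind2 v (hmem2 v hv) w (hmem2 w hw1) ((G.mem_neighborFinset v w).mp hw))
        rw [Finset.sum_congr rfl hnb, Finset.sum_const, G.card_neighborFinset_eq_degree,
          hdeg2 v (hmem2 v hv), nsmul_eq_mul, hxdef]
        simp only [hv, if_false]
        nlinarith [Real.mul_self_sqrt (Nat.cast_nonneg (α := ℝ) δ2)])
  refine ⟨hconn, hE, ⟨hE.anti, hw1, hpdeg, hporth, hpnorm⟩, ?_, ?_, ?_, ?_, ?_⟩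
  · intro u hu v w hvw heq
    have hiff : v ∈ V1 ↔ w ∈ V1 := by rw [← hparity hu v, ← hparity hu w, heq]
    by_cases hv : v ∈ V1
    · exact hind1 v hv w (hiff.mp hv) hvw
    · exact hind2 v (hmem2 v hv) w (hmem2 w fun hw => hv (hiff.mpr hw)) hvw
  · intro i
    split_ifs
    · exact one_pos
    · exact div_pos hδ2 hδ1
  · simp
  · simp [hEven]
  · refine ⟨c * √δ1 * √δ1, fun u hu v => ?_⟩
    rw [hc u v]
    simp only [hparity hu v, x, hu, if_true]
    split_ifs
    · ring
    · field_simp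

end Bipartite

/-- Theorem 3.1(b): a connected bipartite `(δ₁,δ₂)`-semiregular graph with `d+1`
distinct eigenvalues, `d` even and `m(0) ≠ |n₁ − n₂|`, is distance-biregular if and
only if `k̄_{1,d} = p_{1,d}(λ_0)` and `k̄_{2,d} = p_{2,d}(λ_0)`. -/
theorem stmt_12 {V : Type*} [Fintype V] [DecidableEq V]
    (G : SimpleGraph V) [DecidableRel G.Adj] (hconn : G.Connected)
    (V1 V2 : Finset V) (hcover : V1 ∪ V2 = Finset.univ) (hdisj : Disjoint V1 V2)
    (hind1 : ∀ u ∈ V1, ∀ v ∈ V1, ¬ G.Adj u v)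
    (hind2 : ∀ u ∈ V2, ∀ v ∈ V2, ¬ G.Adj u v)
    (δ1 δ2 : ℕ)
    (hdeg1 : ∀ u ∈ V1, G.degree u = δ1) (hdeg2 : ∀ v ∈ V2, G.degree v = δ2)
    (d : ℕ) (lam : ℕ → ℝ) (hlam : StrictAntiOn lam (Set.Iic d))
    (E : ℕ → Matrix V V ℝ)
    (hsym : ∀ i ≤ d, (E i).IsSymm)
    (hsum : ∑ i ∈ Finset.range (d + 1), E i = 1)
    (hmul : ∀ i ≤ d, ∀ j ≤ d, E i * E j = if i = j then E i else 0)
    (heig : ∀ i ≤ d, G.adjMatrix ℝ * E i = lam i • E i)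
    (hnz : ∀ i ≤ d, E i ≠ 0)
    (hEven : Even d)
    -- `m(0) ≠ |n₁ − n₂|`
    (hm0 : ∑ i ∈ (Finset.range (d + 1)).filter (fun i => lam i = 0),
        Matrix.trace (E i) ≠ |(V1.card : ℝ) - (V2.card : ℝ)|)
    -- the orthogonal polynomials for `⟨·,·⟩_{V₁}`, with weights `w_{1,i}`
    (p1 : ℕ → Polynomial ℝ)
    (hp1deg : ∀ i ≤ d, (p1 i).degree = (i : WithBot ℕ))
    (hp1orth : ∀ i ≤ d, ∀ j ≤ d, i ≠ j →
      discInner (Finset.range (d + 1)) lam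
        (fun i => (∑ u ∈ V1, E i u u) / (V1.card : ℝ)) (p1 i) (p1 j) = 0)
    (hp1norm : ∀ i ≤ d,
      discInner (Finset.range (d + 1)) lam
          (fun i => (∑ u ∈ V1, E i u u) / (V1.card : ℝ)) (p1 i) (p1 i)
        = (p1 i).eval (lam 0))
    -- the orthogonal polynomials for `⟨·,·⟩_{V₂}`, with weights `w_{2,i}`
    (p2 : ℕ → Polynomial ℝ)
    (hp2deg : ∀ i ≤ d, (p2 i).degree = (i : WithBot ℕ))
    (hp2orth : ∀ i ≤ d, ∀ j ≤ d, i ≠ j →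
      discInner (Finset.range (d + 1)) lam
        (fun i => (∑ v ∈ V2, E i v v) / (V2.card : ℝ)) (p2 i) (p2 j) = 0)
    (hp2norm : ∀ i ≤ d,
      discInner (Finset.range (d + 1)) lam
          (fun i => (∑ v ∈ V2, E i v v) / (V2.card : ℝ)) (p2 i) (p2 i)
        = (p2 i).eval (lam 0)) :
    IsDistBiregularOn G V1 V2 ↔
      ((1 / (V1.card : ℝ)) * ∑ u ∈ V1, ((sphere G u d).card : ℝ)
          = (p1 d).eval (lam 0) ∧
        (1 / (V2.card : ℝ)) * ∑ v ∈ V2, ((sphere G v d).card : ℝ)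
          = (p2 d).eval (lam 0)) := by
  have hE : IsSpectralDecomposition G d lam E := ⟨hlam, hsym, hsum, hmul, heig, hnz⟩
  have h1 := hE.isSpectralSide hconn hcover hdisj hind1 hind2 hdeg1 hdeg2 hEven hm0
    hp1deg hp1orth hp1norm
  have h2 := hE.isSpectralSide hconn (union_comm V1 V2 ▸ hcover) hdisj.symm hind2 hind1
    hdeg2 hdeg1 hEven (abs_sub_comm (V1.card : ℝ) V2.card ▸ hm0) hp2deg hp2orth hp2norm
  rw [← h1.exists_intersection_numbers_iff, ← h2.exists_intersection_numbers_iff]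
  constructor
  · rintro ⟨c1, b1, c2, b2, hcb1, hcb2⟩
    exact ⟨⟨c1, b1, hcb1⟩, c2, b2, hcb2⟩
  · rintro ⟨⟨c1, b1, hcb1⟩, c2, b2, hcb2⟩
    exact ⟨c1, b1, c2, b2, hcb1, hcb2⟩
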